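/- For every ε > 0 there exists t₀ such that for every t ≥ t₀ there is a finite simple graph G that admits a quasi-K_t-minor but does not admit a K_⌈(2/3+ε)t⌉-minor. -/

import Mathlib

/-- `B` is a family of bags witnessing a `K_t`-minor of `G`: the bags are nonempty,
pairwise disjoint, each induces a connected subgraph, and any two bags are joined by an edge. -/
def IsKMinorBags {V : Type*} (G : SimpleGraph V) {t : ℕ} (B : Fin t → Set V) : Prop :=
  (∀ i, (B i).Nonempty) ∧
  (Pairwise fun i j => Disjoint (B i) (B j)) ∧
  (∀ i, (G.induce (B i)).Connected) ∧
  (∀ i j, i ≠ j → ∃ u ∈ B i, ∃ v ∈ B j, G.Adj u v)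

/-- `G` admits a `K_t`-minor. -/
def HasKMinor {V : Type*} (G : SimpleGraph V) (t : ℕ) : Prop :=
  ∃ B : Fin t → Set V, IsKMinorBags G B

/-- `B` is a family of bags witnessing a quasi-`K_t`-minor of `G`: the bags are nonempty,
pairwise disjoint, and the union of any two distinct bags induces a connected subgraph. -/
def IsQuasiKMinorBags {V : Type*} (G : SimpleGraph V) {t : ℕ} (B : Fin t → Set V) : Prop :=
  (∀ i, (B i).Nonempty) ∧
  (Pairwise fun i j => Disjoint (B i) (B j)) ∧
  (∀ i j, i ≠ j → (G.induce (B i ∪ B j)).Connected)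

/-- `G` admits a quasi-`K_t`-minor. -/
def HasQuasiKMinor {V : Type*} (G : SimpleGraph V) (t : ℕ) : Prop :=
  ∃ B : Fin t → Set V, IsQuasiKMinorBags G B

section Counting
open Finset Classical

lemma qk_card_step {E A : Type} [Fintype E] [DecidableEq E] [Fintype A] (c : E → A) (e : E)
    (P : Finset (E → A)) (hP : ∀ f ∈ P, ∀ a, Function.update f e a ∈ P) :
    Fintype.card A * (P.filter (fun f => f e = c e)).card = P.card := by
  rw [← Finset.card_univ, ← Finset.card_product]
  refine Finset.card_nbij' (fun x => Function.update x.2 e x.1)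
    (fun f => (f e, Function.update f e (c e))) ?_ ?_ ?_ ?_
  · rintro ⟨a, f⟩ h
    simp only [Finset.coe_product, Set.mem_prod, Finset.mem_coe, Finset.mem_filter] at h
    exact hP f h.2.1 a
  · intro f hf
    simp only [Finset.coe_product, Set.mem_prod, Finset.mem_coe, Finset.mem_filter]
    exact ⟨Finset.mem_univ _, hP f hf _, by simp⟩
  · rintro ⟨a, f⟩ h
    simp only [Finset.coe_product, Set.mem_prod, Finset.mem_coe, Finset.mem_filter] at h
    simp [← h.2.2]
  · intro f hf
    simp

lemma qk_block {E A : Type} [Fintype E] [DecidableEq E] [Fintype A] (c : E → A) (S : Finset E) :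
    ∀ (P : Finset (E → A)), (∀ f ∈ P, ∀ e ∈ S, ∀ a, Function.update f e a ∈ P) →
    Fintype.card A ^ S.card * (P.filter (fun f => ∀ e ∈ S, f e = c e)).card = P.card := by
  induction S using Finset.induction_on with
  | empty => intro P _; simp
  | insert e S he ih =>
    intro P hP
    have h1 := qk_card_step c e P (fun f hf a => hP f hf e (by simp) a)
    have h2 := ih (P.filter (fun f => f e = c e)) (by
      intro f hf e' he' a
      rw [Finset.mem_filter] at hf ⊢
      refine ⟨hP f hf.1 e' (by simp [he']) a, ?_⟩
      rw [Function.update_of_ne (by rintro rfl; exact he he')]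
      exact hf.2)
    rw [Finset.card_insert_of_notMem he, ← h1, ← h2, Finset.filter_filter]
    have : (P.filter (fun f => ∀ e' ∈ insert e S, f e' = c e'))
        = P.filter (fun f => f e = c e ∧ ∀ e' ∈ S, f e' = c e') := by
      apply Finset.filter_congr; intro f _; simp
    rw [this]; ring

lemma qk_blocks {E A κ : Type} [Fintype E] [DecidableEq E] [Fintype A] (c : E → A) (hA : Fintype.card A = 4)
    (S : κ → Finset E) (hS : ∀ k, (S k).card ≤ 4)
    (hd : ∀ k l, k ≠ l → Disjoint (S k) (S l)) (K : Finset κ) :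
    256 ^ K.card * ((univ : Finset (E → A)).filter
      (fun f => ∀ k ∈ K, ∃ e ∈ S k, f e ≠ c e)).card
      ≤ 255 ^ K.card * Fintype.card (E → A) := by
  induction K using Finset.induction_on with
  | empty => simp
  | insert k K hk ih =>
    set P := (univ : Finset (E → A)).filter (fun f => ∀ k ∈ K, ∃ e ∈ S k, f e ≠ c e) with hPdef
    have h1 := qk_block c (S k) P (by
      intro f hf e he a
      rw [hPdef, Finset.mem_filter] at hf ⊢
      refine ⟨Finset.mem_univ _, fun k' hk' => ?_⟩
      obtain ⟨e', he', hne⟩ := hf.2 k' hk'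
      refine ⟨e', he', ?_⟩
      have : k ≠ k' := by rintro rfl; exact hk hk'
      have hee : e' ≠ e := by
        rintro rfl
        exact Finset.disjoint_left.1 (hd _ _ this) he he'
      rwa [Function.update_of_ne hee])
    have h2 := Finset.card_filter_add_card_filter_not (s := P) (fun f => ∀ e ∈ S k, f e = c e)
    have h3 : ((univ : Finset (E → A)).filter
        (fun f => ∀ k' ∈ insert k K, ∃ e ∈ S k', f e ≠ c e))
        = P.filter (fun f => ¬ ∀ e ∈ S k, f e = c e) := by
      ext f
      simp only [hPdef, Finset.mem_filter, Finset.mem_univ, true_and, Finset.mem_insert,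
        forall_eq_or_imp]
      push Not
      tauto
    rw [h3, Finset.card_insert_of_notMem hk]
    rw [hA] at h1
    have h4 : 4 ^ (S k).card ≤ 4 ^ 4 := Nat.pow_le_pow_right (by norm_num) (hS k)
    have h5 : P.card ≤ 256 * (P.filter (fun f => ∀ e ∈ S k, f e = c e)).card := by
      calc P.card = _ := h1.symm
        _ ≤ _ := Nat.mul_le_mul_right _ (by simpa using h4)
    have h6 : 256 * (P.filter (fun f => ¬ ∀ e ∈ S k, f e = c e)).card ≤ 255 * P.card := by omega
    calc 256 ^ (K.card + 1) * (P.filter (fun f => ¬ ∀ e ∈ S k, f e = c e)).card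
        = 256 ^ K.card * (256 * (P.filter (fun f => ¬ ∀ e ∈ S k, f e = c e)).card) := by ring
      _ ≤ 256 ^ K.card * (255 * P.card) := Nat.mul_le_mul_left _ h6
      _ = 255 * (256 ^ K.card * P.card) := by ring
      _ ≤ 255 * (255 ^ K.card * Fintype.card (E → A)) := Nat.mul_le_mul_left _ ih
      _ = _ := by ring

/-- The classes `D x`. -/
def qkD {t : ℕ} {ι : Type} (p : ι → Fin t × Fin t) (x : ι) : Finset (Fin t) :=
  {(p x).1, (p x).2}

/-- The target pattern. -/
def qkC {t : ℕ} (s : Fin t → Bool) (e : Sym2 (Fin t)) : Bool × Bool := (s e.inf, s e.sup)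

lemma qk_bad {t m : ℕ} (s : Fin t → Bool) (p : Fin m ⊕ Fin m → Fin t × Fin t)
    (hp : ∀ x y, x ≠ y → Disjoint (qkD p x) (qkD p y)) :
    256 ^ (m * m) * ((univ : Finset (Sym2 (Fin t) → Bool × Bool)).filter
      (fun f => ∀ k l : Fin m, ∃ x ∈ qkD p (.inl k), ∃ y ∈ qkD p (.inr l),
        f s(x, y) ≠ qkC s s(x, y))).card
      ≤ 255 ^ (m * m) * Fintype.card (Sym2 (Fin t) → Bool × Bool) := by
  have h := qk_blocks (E := Sym2 (Fin t)) (A := Bool × Bool) (κ := Fin m × Fin m) (qkC s)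
    (by simp) (fun kl => (qkD p (.inl kl.1) ×ˢ qkD p (.inr kl.2)).image (fun xy => s(xy.1, xy.2)))
    (by
      intro kl
      refine Finset.card_image_le.trans ?_
      rw [Finset.card_product]
      exact Nat.mul_le_mul (Finset.card_le_two) (Finset.card_le_two))
    (by
      rintro ⟨k, l⟩ ⟨k', l'⟩ hne
      rw [Finset.disjoint_left]
      intro e he he'
      simp only [Finset.mem_image, Finset.mem_product, Prod.exists] at he he'
      obtain ⟨x, y, ⟨hx, hy⟩, rfl⟩ := he
      obtain ⟨x', y', ⟨hx', hy'⟩, h⟩ := he'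
      have key : ∀ a b z, z ∈ qkD p a → z ∈ qkD p b → a = b := by
        intro a b z ha hb
        by_contra hab
        exact Finset.disjoint_left.1 (hp a b hab) ha hb
      rw [Sym2.eq_iff] at h
      rcases h with ⟨rfl, rfl⟩ | ⟨rfl, rfl⟩
      · have h1 := key _ _ _ hx hx'
        have h2 := key _ _ _ hy hy'
        simp only [Sum.inl.injEq, Sum.inr.injEq] at h1 h2
        exact hne (by rw [h1, h2])
      · have h1 := key _ _ _ hx hy'
        simp at h1)
    univ
  simp only [Finset.card_univ, Fintype.card_prod, Fintype.card_fin] at h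
  refine le_trans (le_of_eq ?_) h
  refine congrArg (256 ^ (m * m) * ·) (congrArg Finset.card (Finset.ext fun f => ?_))
  simp only [Finset.mem_filter, Finset.mem_univ, true_and, forall_const, Prod.forall,
    Finset.mem_image, Finset.mem_product, Prod.exists]
  refine forall_congr' fun k => forall_congr' fun l => ?_
  constructor
  · rintro ⟨x, hx, y, hy, h⟩
    exact ⟨_, ⟨x, y, ⟨hx, hy⟩, rfl⟩, h⟩
  · rintro ⟨_, ⟨x, y, ⟨hx, hy⟩, rfl⟩, h⟩
    exact ⟨x, hx, y, hy, h⟩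

lemma qk_exists {t m : ℕ} (hnum : 2 ^ t * (t * t) ^ (m + m) * 255 ^ (m * m) < 256 ^ (m * m)) :
    ∃ f : Sym2 (Fin t) → Bool × Bool, ∀ (s : Fin t → Bool) (p : Fin m ⊕ Fin m → Fin t × Fin t),
      (∀ x y, x ≠ y → Disjoint (qkD p x) (qkD p y)) →
      ∃ k l : Fin m, ∀ x ∈ qkD p (.inl k), ∀ y ∈ qkD p (.inr l), f s(x, y) = qkC s s(x, y) := by
  by_contra hcon
  push Not at hcon
  let I := (Fin t → Bool) × (Fin m ⊕ Fin m → Fin t × Fin t)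
  let J : Finset I := univ.filter (fun i => ∀ x y, x ≠ y → Disjoint (qkD i.2 x) (qkD i.2 y))
  let F : I → Finset (Sym2 (Fin t) → Bool × Bool) := fun i => univ.filter
      (fun f => ∀ k l : Fin m, ∃ x ∈ qkD i.2 (.inl k), ∃ y ∈ qkD i.2 (.inr l),
        f s(x, y) ≠ qkC i.1 s(x, y))
  have hcov : (univ : Finset (Sym2 (Fin t) → Bool × Bool)) ⊆ J.biUnion F := by
    intro f _
    obtain ⟨s, p, hp, h⟩ := hcon f
    rw [Finset.mem_biUnion]
    exact ⟨(s, p), by simpa [J] using hp, by simpa [F] using h⟩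
  set N := Fintype.card (Sym2 (Fin t) → Bool × Bool) with hN
  have hNpos : 0 < N := Fintype.card_pos
  have h1 : N ≤ ∑ i ∈ J, (F i).card := by
    rw [hN, ← Finset.card_univ]
    exact (Finset.card_le_card hcov).trans Finset.card_biUnion_le
  have h2 : 256 ^ (m * m) * N ≤ J.card * (255 ^ (m * m) * N) := by
    calc 256 ^ (m * m) * N ≤ 256 ^ (m * m) * ∑ i ∈ J, (F i).card := Nat.mul_le_mul_left _ h1
      _ = ∑ i ∈ J, 256 ^ (m * m) * (F i).card := Finset.mul_sum _ _ _
      _ ≤ ∑ i ∈ J, 255 ^ (m * m) * N := by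
        refine Finset.sum_le_sum fun i hi => ?_
        exact qk_bad i.1 i.2 (by simpa [J] using hi)
      _ = _ := by rw [Finset.sum_const, smul_eq_mul]
  have h3 : J.card ≤ 2 ^ t * (t * t) ^ (m + m) := by
    refine (Finset.card_le_univ J).trans (le_of_eq ?_)
    simp [I]
  have h4 : J.card * (255 ^ (m * m) * N) < 256 ^ (m * m) * N := by
    calc J.card * (255 ^ (m * m) * N) ≤ (2 ^ t * (t * t) ^ (m + m)) * (255 ^ (m * m) * N) :=
          Nat.mul_le_mul_right _ h3
      _ = (2 ^ t * (t * t) ^ (m + m) * 255 ^ (m * m)) * N := by ring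
      _ < _ := Nat.mul_lt_mul_of_pos_right hnum hNpos
  omega

end Counting

/-- Numerics. -/
lemma qk_numerics (δ : ℝ) (hδ : 0 < δ) : ∃ t₀ : ℕ, ∀ t : ℕ, t₀ ≤ t → ∀ m : ℕ, δ * t ≤ m →
    2 ^ t * (t * t) ^ (m + m) * 255 ^ (m * m) < 256 ^ (m * m) := by
  set c : ℝ := Real.log 256 - Real.log 255 with hc
  have hcpos : 0 < c := by
    have := Real.log_lt_log (by norm_num : (0:ℝ) < 255) (by norm_num : (255:ℝ) < 256)
    linarith
  have hlo : ∀ᶠ x : ℝ in Filter.atTop, ‖Real.log x‖ ≤ (c * δ / 8) * ‖x‖ :=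
    Real.isLittleO_log_id_atTop.bound (by positivity)
  have hlo' := (tendsto_natCast_atTop_atTop (R := ℝ)).eventually hlo
  have hbig := (tendsto_natCast_atTop_atTop (R := ℝ)).eventually
    (Filter.eventually_gt_atTop (2 / (c * δ * δ)))
  obtain ⟨t₀, h₀⟩ := Filter.eventually_atTop.1 ((hlo'.and hbig).and (Filter.eventually_ge_atTop 1))
  refine ⟨t₀, fun t ht m hm => ?_⟩
  obtain ⟨⟨h1, h2⟩, h3⟩ := h₀ t ht
  have htpos : (0:ℝ) < t := by exact_mod_cast h3
  have hmpos : (0:ℝ) < m := lt_of_lt_of_le (by positivity) hm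
  have h1' : Real.log t ≤ c * δ / 8 * t := by
    have := le_trans (le_abs_self _) h1
    simpa [abs_of_pos htpos] using this
  have hl2 : Real.log 2 < 1 := by
    have := Real.log_two_lt_d9; linarith
  have key : t * Real.log 2 + (m + m) * (Real.log t + Real.log t) + (m * m) * Real.log 255
      < (m * m) * Real.log 256 := by
    have e1 : t * Real.log 2 < c * m * m / 2 := by
      have : (2:ℝ) < t * (c * δ * δ) := by
        rwa [div_lt_iff₀ (by positivity)] at h2
      have a1 : t * Real.log 2 < t := by nlinarith
      have a2 : (δ * t) * (δ * t) ≤ m * m := mul_le_mul hm hm (by positivity) hmpos.le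
      have a3 : c * ((δ * t) * (δ * t)) ≤ c * (m * m) := mul_le_mul_of_nonneg_left a2 hcpos.le
      nlinarith
    have e2 : (m + m) * (Real.log t + Real.log t) ≤ c * m * m / 2 := by
      have a1 : Real.log t ≤ c / 8 * m := by
        have : c / 8 * (δ * t) ≤ c / 8 * m := mul_le_mul_of_nonneg_left hm (by positivity)
        linarith
      nlinarith
    have e3 : c * m * m = m * m * Real.log 256 - m * m * Real.log 255 := by rw [hc]; ring
    linarith
  have hfin : (2:ℝ) ^ t * (t * t) ^ (m + m) * 255 ^ (m * m) < 256 ^ (m * m) := by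
    rw [← Real.log_lt_log_iff (by positivity) (by positivity)]
    rw [Real.log_mul (by positivity) (by positivity), Real.log_mul (by positivity) (by positivity),
      Real.log_pow, Real.log_pow, Real.log_pow, Real.log_pow,
      Real.log_mul (by positivity) (by positivity)]
    push_cast
    exact key
  exact_mod_cast hfin

/-- The graph. -/
def qkG {t : ℕ} (f : Sym2 (Fin t) → Bool × Bool) : SimpleGraph (Fin t × Bool) where
  Adj u v := u.1 ≠ v.1 ∧ f s(u.1, v.1) ≠ if u.1 < v.1 then (u.2, v.2) else (v.2, u.2)
  symm := ⟨by
    rintro u v ⟨h, h'⟩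
    refine ⟨h.symm, ?_⟩
    rw [Sym2.eq_swap]
    rcases lt_or_gt_of_ne h with hl | hl
    · simpa [hl, hl.not_gt] using h'
    · simpa [hl, hl.not_gt] using h'⟩
  loopless := ⟨fun u h => h.1 rfl⟩

lemma qkG_pair {t : ℕ} (f : Sym2 (Fin t) → Bool × Bool) (i j : Fin t) (h : i ≠ j) :
    ∃ α β : Bool, ∀ a b, ¬ (a = α ∧ b = β) → (qkG f).Adj (i, a) (j, b) := by
  rcases lt_or_gt_of_ne h with hl | hl
  · refine ⟨(f s(i, j)).1, (f s(i, j)).2, fun a b hab => ⟨h, ?_⟩⟩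
    simp only [hl, if_true]
    intro he
    apply hab
    rw [he]
    simp
  · refine ⟨(f s(i, j)).2, (f s(i, j)).1, fun a b hab => ⟨h, ?_⟩⟩
    simp only [hl.not_gt, if_false]
    intro he
    apply hab
    rw [he]
    simp

lemma qkG_quasi {t : ℕ} (f : Sym2 (Fin t) → Bool × Bool) : HasQuasiKMinor (qkG f) t := by
  refine ⟨fun i => {v | v.1 = i}, fun i => ⟨(i, true), rfl⟩, ?_, ?_⟩
  · intro i j hij
    rw [Set.disjoint_left]
    rintro v rfl h
    exact hij h
  · intro i j hij
    obtain ⟨α, β, h⟩ := qkG_pair f i j hij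
    set X : Set (Fin t × Bool) := {v | v.1 = i} ∪ {v | v.1 = j} with hX
    have hi : ∀ a, (i, a) ∈ X := fun a => Or.inl rfl
    have hj : ∀ a, (j, a) ∈ X := fun a => Or.inr rfl
    have hadj : ∀ a b, ¬ (a = α ∧ b = β) →
        ((qkG f).induce X).Reachable ⟨(i, a), hi a⟩ ⟨(j, b), hj b⟩ := by
      intro a b hab
      apply SimpleGraph.Adj.reachable
      exact h a b hab
    have hJ : ∀ b, ((qkG f).induce X).Reachable ⟨(i, !α), hi _⟩ ⟨(j, b), hj b⟩ :=
      fun b => hadj _ _ (by simp)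
    have hI : ∀ a, ((qkG f).induce X).Reachable ⟨(i, !α), hi _⟩ ⟨(i, a), hi a⟩ :=
      fun a => (hJ (!β)).trans (hadj a (!β) (by simp)).symm
    have hall : ∀ v : X, ((qkG f).induce X).Reachable ⟨(i, !α), hi _⟩ v := by
      rintro ⟨⟨k, a⟩, hk⟩
      rcases hk with hk | hk
      · have hk' : k = i := hk
        subst hk'
        exact hI a
      · have hk' : k = j := hk
        subst hk'
        exact hJ a
    have : Nonempty X := ⟨⟨(i, true), hi _⟩⟩
    exact ⟨fun u v => (hall u).symm.trans (hall v)⟩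

/-- A small connected bag. -/
lemma qk_small {t : ℕ} (f : Sym2 (Fin t) → Bool × Bool) (B : Set (Fin t × Bool))
    (hc : ((qkG f).induce B).Connected) (h2 : B.ncard ≤ 2) :
    ∃ u v : Fin t × Bool, B = {u, v} ∧ (u.1 = v.1 → u = v) := by
  obtain ⟨⟨u, hu⟩⟩ := hc.nonempty
  by_cases hex : ∃ v ∈ B, v ≠ u
  · obtain ⟨v, hv, hne⟩ := hex
    have hB : B = {u, v} := by
      symm
      apply Set.eq_of_subset_of_ncard_le
      · rintro w (rfl | rfl) <;> assumption
      · rw [Set.ncard_pair hne.symm]; exact h2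
      · exact Set.toFinite B
    refine ⟨u, v, hB, fun h1 => ?_⟩
    exfalso
    have hnt : Nontrivial B := ⟨⟨u, hu⟩, ⟨v, hv⟩, fun h => hne (congrArg Subtype.val h).symm⟩
    obtain ⟨⟨w, hw⟩, hw'⟩ := hc.preconnected.exists_adj_of_nontrivial ⟨u, hu⟩
    have hw'' : (qkG f).Adj u w := hw'
    rw [hB] at hw
    rcases hw with rfl | rfl
    · exact hw''.1 rfl
    · exact hw''.1 h1
  · push Not at hex
    refine ⟨u, u, ?_, fun _ => rfl⟩
    ext w
    simp only [Set.mem_insert_iff, Set.mem_singleton_iff, or_self]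
    exact ⟨hex w, by rintro rfl; exact hu⟩

section Final
open Finset Classical

/-- Core: given good `f`, the number of bags is bounded. -/
lemma qk_bound {t m n : ℕ} (f : Sym2 (Fin t) → Bool × Bool)
    (hf : ∀ (s : Fin t → Bool) (p : Fin m ⊕ Fin m → Fin t × Fin t),
      (∀ x y, x ≠ y → Disjoint (qkD p x) (qkD p y)) →
      ∃ k l : Fin m, ∀ x ∈ qkD p (.inl k), ∀ y ∈ qkD p (.inr l), f s(x, y) = qkC s s(x, y))
    (h : HasKMinor (qkG f) n) : 3 * n ≤ 2 * t + 24 * m := by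
  obtain ⟨B, hne, hdisj, hconn, hadj⟩ := h
  have huniq : ∀ i j v, v ∈ B i → v ∈ B j → i = j := by
    intro i j v hi hj
    by_contra hij
    exact Set.disjoint_left.1 (hdisj hij) hi hj
  let small : Finset (Fin n) := univ.filter (fun i => (B i).ncard ≤ 2)
  let big : Finset (Fin n) := univ.filter (fun i => ¬ (B i).ncard ≤ 2)
  have hsb : small.card + big.card = n := by
    have := Finset.card_filter_add_card_filter_not (s := (univ : Finset (Fin n)))
      (fun i => (B i).ncard ≤ 2)
    simpa [small, big] using this
  -- big bags
  have hbig : 3 * big.card ≤ 2 * t := by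
    have h1 : (big.biUnion (fun i => (B i).toFinset)).card = ∑ i ∈ big, (B i).toFinset.card := by
      apply Finset.card_biUnion
      intro i _ j _ hij
      exact Set.disjoint_toFinset.2 (hdisj hij)
    have h2 : ∑ i ∈ big, 3 ≤ ∑ i ∈ big, (B i).toFinset.card := by
      refine Finset.sum_le_sum fun i hi => ?_
      have : ¬ (B i).ncard ≤ 2 := (Finset.mem_filter.1 hi).2
      rw [Set.ncard_eq_toFinset_card'] at this
      omega
    have h3 : (big.biUnion (fun i => (B i).toFinset)).card ≤ t * 2 := by
      refine (Finset.card_le_univ _).trans ?_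
      simp
    rw [Finset.sum_const, smul_eq_mul] at h2
    omega
  -- small bags
  have hsm : ∀ i : Fin n, ∃ uv : (Fin t × Bool) × (Fin t × Bool), i ∈ small →
      (B i = {uv.1, uv.2} ∧ (uv.1.1 = uv.2.1 → uv.1 = uv.2)) := by
    intro i
    by_cases hi : i ∈ small
    · obtain ⟨u, v, h⟩ := qk_small f (B i) (hconn i) (Finset.mem_filter.1 hi).2
      exact ⟨(u, v), fun _ => h⟩
    · obtain ⟨u, _⟩ := hne i
      exact ⟨(u, u), fun h => absurd h hi⟩
  choose uv huv using hsm
  let D : Fin n → Finset (Fin t) := fun i => {(uv i).1.1, (uv i).2.1}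
  have hD : ∀ i ∈ small, ∀ w ∈ B i, w.1 ∈ D i := by
    intro i hi w hw
    rw [(huv i hi).1] at hw
    rcases hw with rfl | rfl <;> simp [D]
  have hD' : ∀ i ∈ small, ∀ x ∈ D i, ∃ w ∈ B i, w.1 = x := by
    intro i hi x hx
    rw [(huv i hi).1]
    simp only [D, Finset.mem_insert, Finset.mem_singleton] at hx
    rcases hx with rfl | rfl
    · exact ⟨_, Or.inl rfl, rfl⟩
    · exact ⟨_, Or.inr rfl, rfl⟩
  have hside : ∀ i ∈ small, ∀ w ∈ B i, ∀ w' ∈ B i, w.1 = w'.1 → w = w' := by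
    intro i hi w hw w' hw' he
    obtain ⟨h1, h2⟩ := huv i hi
    rw [h1] at hw hw'
    rcases hw with rfl | rfl <;> rcases hw' with rfl | rfl
    · rfl
    · exact h2 he
    · exact (h2 he.symm).symm
    · rfl
  -- maximal disjoint subfamily
  let good : Finset (Finset (Fin n)) := small.powerset.filter
    (fun W => ∀ i ∈ W, ∀ j ∈ W, i ≠ j → Disjoint (D i) (D j))
  obtain ⟨W, hWg, hWmax⟩ := Finset.exists_max_image good Finset.card
    ⟨∅, by simp [good]⟩
  have hWs : W ⊆ small := Finset.mem_powerset.1 (Finset.mem_filter.1 hWg).1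
  have hWd := (Finset.mem_filter.1 hWg).2
  have hcov : ∀ i ∈ small, ∃ w ∈ B i, w.1 ∈ W.biUnion D := by
    intro i hi
    by_contra hcon
    push Not at hcon
    have hiD : ∀ j ∈ W, Disjoint (D i) (D j) := by
      intro j hj
      rw [Finset.disjoint_left]
      intro x hx hxj
      obtain ⟨w, hw, rfl⟩ := hD' i hi x hx
      exact hcon w hw (Finset.mem_biUnion.2 ⟨j, hj, hxj⟩)
    have hiW : i ∉ W := by
      intro hiW
      have := hiD i hiW
      rw [Finset.disjoint_self_iff_empty] at this
      simp [D] at this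
    have : insert i W ∈ good := by
      rw [Finset.mem_filter, Finset.mem_powerset]
      refine ⟨Finset.insert_subset hi hWs, ?_⟩
      intro a ha b hb hab
      rw [Finset.mem_insert] at ha hb
      rcases ha with rfl | ha <;> rcases hb with rfl | hb
      · exact absurd rfl hab
      · exact hiD b hb
      · exact (hiD a ha).symm
      · exact hWd a ha b hb hab
    have := hWmax _ this
    rw [Finset.card_insert_of_notMem hiW] at this
    omega
  have hsmall : small.card ≤ 4 * W.card := by
    have : ∀ i : Fin n, ∃ w : Fin t × Bool, i ∈ small → w ∈ B i ∧ w.1 ∈ W.biUnion D := by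
      intro i
      by_cases hi : i ∈ small
      · obtain ⟨w, h1, h2⟩ := hcov i hi
        exact ⟨w, fun _ => ⟨h1, h2⟩⟩
      · obtain ⟨u, _⟩ := hne i
        exact ⟨u, fun h => absurd h hi⟩
    choose g hg using this
    have h1 : small.card ≤ (W.biUnion D ×ˢ (univ : Finset Bool)).card := by
      refine Finset.card_le_card_of_injOn g ?_ ?_
      · intro i hi
        simp only [Finset.coe_product, Set.mem_prod, Finset.mem_coe]
        exact ⟨(hg i hi).2, Finset.mem_univ _⟩
      · intro i hi j hj hij
        exact huniq i j (g i) (hg i hi).1 (hij ▸ (hg j hj).1)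
    rw [Finset.card_product] at h1
    have h2 : (W.biUnion D).card ≤ W.card * 2 :=
      Finset.card_biUnion_le_card_mul _ _ _ (fun i _ => Finset.card_le_two)
    simp only [Finset.card_univ, Fintype.card_bool] at h1
    omega
  -- W is small
  have hW : W.card ≤ 2 * m := by
    by_contra hlt
    push Not at hlt
    obtain ⟨φ⟩ : Nonempty (Fin m ⊕ Fin m ↪ W) := by
      apply Function.Embedding.nonempty_of_card_le
      simp only [Fintype.card_sum, Fintype.card_fin, Fintype.card_coe]
      omega
    let s : Fin t → Bool := fun x => decide (∃ i ∈ W, (x, true) ∈ B i)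
    have hs : ∀ i ∈ W, ∀ w ∈ B i, s w.1 = w.2 := by
      rintro i hi ⟨x, b⟩ hw
      cases b with
      | true => simpa [s] using ⟨i, hi, hw⟩
      | false =>
        simp only [s, decide_eq_false_iff_not]
        rintro ⟨j, hj, hw'⟩
        have hij : i = j := by
          by_contra hij
          have hx1 : x ∈ D i := hD i (hWs hi) _ hw
          have hx2 : x ∈ D j := hD j (hWs hj) _ hw'
          exact Finset.disjoint_left.1 (hWd i hi j hj hij) hx1 hx2
        subst hij
        have := hside i (hWs hi) _ hw _ hw' rfl
        simp at this
    obtain ⟨k, l, hkl⟩ := hf s (fun x => ((uv (φ x)).1.1, (uv (φ x)).2.1)) (by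
      intro x y hxy
      exact hWd _ (φ x).2 _ (φ y).2 (fun h => hxy (φ.injective (Subtype.ext h))))
    have hne' : (φ (.inl k) : Fin n) ≠ φ (.inr l) := by
      intro h
      have := φ.injective (Subtype.ext h)
      simp at this
    obtain ⟨u, hu, v, hv, huv1, huv2⟩ := hadj _ _ hne'
    have h1 := hkl u.1 (hD _ (hWs (φ (.inl k)).2) u hu) v.1 (hD _ (hWs (φ (.inr l)).2) v hv)
    apply huv2
    rw [h1]
    have hsu := hs _ (φ (.inl k)).2 u hu
    have hsv := hs _ (φ (.inr l)).2 v hv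
    rcases lt_or_gt_of_ne huv1 with hl | hl
    · simp [qkC, hl, hl.le, hsu, hsv]
    · simp [qkC, hl.not_gt, hl.le, hsu, hsv]
  omega

end Final


/-- For every `ε > 0` there exists `t₀` such that for every `t ≥ t₀` there is a finite simple
graph `G` that admits a quasi-`K_t`-minor but does not admit a `K_⌈(2/3+ε)t⌉`-minor. -/
theorem statement0 (ε : ℝ) (hε : 0 < ε) :
    ∃ t₀ : ℕ, ∀ t : ℕ, t₀ ≤ t →
      ∃ (V : Type) (_ : Fintype V) (G : SimpleGraph V),
        HasQuasiKMinor G t ∧ ¬ HasKMinor G ⌈(2 / 3 + ε) * (t : ℝ)⌉₊ := by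
  obtain ⟨t₀, h₀⟩ := qk_numerics (ε / 16) (by positivity)
  refine ⟨max t₀ (⌈16 / ε⌉₊ + 1), fun t ht => ?_⟩
  have ht1 : t₀ ≤ t := le_trans (le_max_left _ _) ht
  have ht2 : 16 / ε < t := by
    have : ⌈16 / ε⌉₊ + 1 ≤ t := le_trans (le_max_right _ _) ht
    have h' : (⌈16 / ε⌉₊ : ℝ) + 1 ≤ t := by exact_mod_cast this
    linarith [Nat.le_ceil (16 / ε)]
  have ht3 : 16 < ε * t := by
    rw [div_lt_iff₀ hε] at ht2
    linarith
  obtain ⟨f, hf⟩ := qk_exists (h₀ t ht1 ⌈ε / 16 * t⌉₊ (Nat.le_ceil _))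
  refine ⟨Fin t × Bool, inferInstance, qkG f, qkG_quasi f, fun hK => ?_⟩
  have hb := qk_bound f hf hK
  have hb' : (3:ℝ) * ⌈(2 / 3 + ε) * (t : ℝ)⌉₊ ≤ 2 * t + 24 * ⌈ε / 16 * t⌉₊ := by exact_mod_cast hb
  have h1 := Nat.le_ceil ((2 / 3 + ε) * (t : ℝ))
  have h2 := Nat.ceil_lt_add_one (show 0 ≤ ε / 16 * (t:ℝ) by positivity)
  nlinarith
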